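/- (Selberg integral) Let n≥2 be an integer and α,β,γ∈ℂ with Re(α)>0, Re(β)>0 and Re(γ) > −min{1/n, Re(α)/(n−1), Re(β)/(n−1)}. Then ∫_0^1⋯∫_0^1 ∏_{j=1}^n t_j^{α−1}(1−t_j)^{β−1} ∏_{1≤j<k≤n}|t_j−t_k|^{2γ} dt_1⋯dt_n = ∏_{j=0}^{n−1} Γ(α+jγ)Γ(β+jγ)Γ(1+(j+1)γ) / ( Γ(α+β+(n+j−1)γ)Γ(1+γ) ). -/

import Mathlib

/-!
The proof has two halves: the formula for real parameters `a, b, c ≥ 1`, where nothing is singular,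
and its continuation to the full domain.

*Large real parameters.* For `a, b, c ≥ 1` the integrand is bounded, and Aomoto's argument applies:
integrating the derivative in one variable of the weight times a squarefree monomial, and
antisymmetrising the interaction terms `1 / (t 0 - t j)`, gives a relation (`aomoto`) between the
averages of squarefree monomials of consecutive degrees. Multiplied up, these relations express
`S n (a + 1) b c` through `S n a b c` (`S_add_one`), while at `a = 1` a similar integration by parts
leaves a boundary term which is a Selberg integral in one variable fewer (`S_one`). As `S` is
nonnegative and antitone in `a`, the recursion and the value at `a = 1` determine it
(`eq_of_antitone_of_recursion`), which gives `S_eq_Q` by induction on `n`.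

*All real parameters.* Fix `(a, b, c)` in the domain. In the direction `(1, 1, 1)` the integral is
the moment generating function of the nonpositive function `logWeight 1 1 1` for the measure with
density `weight a b c`. It is known for large arguments, and the Gamma product is holomorphic
slightly to the left of `0`; by positivity of the Taylor terms (`mgf_extend`) the integral then
converges at `0` and has the expected value (`real_selberg`).

*Complex parameters.* With `p` and `q` the real and imaginary parts of `(α, β, γ)`, the integral at
`p + z q` is a complex moment generating function, holomorphic in a strip around the imaginary axis
and equal to the Gamma product at real `z` near `0`. The identity theorem gives the value at
`z = I` (`complex_selberg`).
-/

open MeasureTheory Complex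

namespace Selberg

/-! ### The unit cube and the Vandermonde product -/

/-- The uniform probability measure on the open unit interval. -/
noncomputable def unitMeasure : Measure ℝ := volume.restrict (Set.Ioo 0 1)

instance : IsProbabilityMeasure unitMeasure :=
  ⟨by simp [unitMeasure]⟩

/-- The uniform probability measure on the open unit cube. -/
noncomputable def cubeMeasure (n : ℕ) : Measure (Fin n → ℝ) := Measure.pi fun _ => unitMeasure

instance (n : ℕ) : IsProbabilityMeasure (cubeMeasure n) := by
  unfold cubeMeasure; infer_instance

lemma cubeMeasure_eq (n : ℕ) :
    cubeMeasure n = volume.restrict (Set.univ.pi fun _ : Fin n => Set.Icc (0:ℝ) 1) := by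
  rw [cubeMeasure, volume_pi, Measure.restrict_pi_pi]
  congr 1
  funext i
  exact Measure.restrict_congr_set Ioo_ae_eq_Icc

lemma ae_mem_cube (n : ℕ) : ∀ᵐ t ∂cubeMeasure n, ∀ i, t i ∈ Set.Ioo (0:ℝ) 1 := by
  rw [ae_all_iff]
  intro i
  have h : ∀ᵐ x ∂unitMeasure, x ∈ Set.Ioo (0:ℝ) 1 := ae_restrict_mem measurableSet_Ioo
  exact Measure.tendsto_eval_ae_ae.eventually h

lemma ae_injective (n : ℕ) : ∀ᵐ t ∂cubeMeasure n, Function.Injective t := by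
  rw [cubeMeasure_eq]
  apply ae_restrict_of_ae
  have h : ∀ i j : Fin n, i ≠ j → ∀ᵐ t : Fin n → ℝ, t i ≠ t j := by
    intro i j hij
    have h0 := Measure.addHaar_submodule (volume : Measure (Fin n → ℝ))
      (LinearMap.ker ((LinearMap.proj i : (Fin n → ℝ) →ₗ[ℝ] ℝ) - LinearMap.proj j)) (by
        intro h
        have h1 : (Pi.single i 1 : Fin n → ℝ) ∈ LinearMap.ker
          ((LinearMap.proj i : (Fin n → ℝ) →ₗ[ℝ] ℝ) - LinearMap.proj j) := h ▸ Submodule.mem_top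
        simp [hij.symm] at h1)
    rw [ae_iff]
    convert h0 using 2
    ext t
    simp [sub_eq_zero]
  have h2 : ∀ᵐ t : Fin n → ℝ, ∀ i j : Fin n, i ≠ j → t i ≠ t j := by
    simp only [ae_all_iff]
    exact h
  filter_upwards [h2] with t ht i j hij
  by_contra hne
  exact ht i j hne hij

lemma integral_perm {n : ℕ} (σ : Equiv.Perm (Fin n)) (f : (Fin n → ℝ) → ℝ) :
    ∫ t, f (t ∘ σ) ∂cubeMeasure n = ∫ t, f t ∂cubeMeasure n := by
  have h := measurePreserving_piCongrLeft (fun _ : Fin n => unitMeasure) σ.symm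
  have h2 := h.integral_comp' f
  rw [cubeMeasure, ← h2]
  congr 1
  funext t
  congr 1
  funext i
  have := Equiv.piCongrLeft_apply_apply (P := fun _ => ℝ) σ.symm t (σ i)
  simpa [MeasurableEquiv.coe_piCongrLeft] using this.symm

/-- Fubini, with the first coordinate integrated first. -/
lemma integral_succ {n : ℕ} (f : (Fin (n + 1) → ℝ) → ℝ) (hf : Integrable f (cubeMeasure (n + 1))) :
    (∫ t, f t ∂cubeMeasure (n + 1) = ∫ s, (∫ x in (0:ℝ)..1, f (Fin.cons x s)) ∂cubeMeasure n) ∧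
    ∀ᵐ s ∂cubeMeasure n, IntervalIntegrable (fun x => f (Fin.cons x s)) volume 0 1 := by
  have h := (measurePreserving_piFinSuccAbove (fun _ : Fin (n + 1) => unitMeasure) 0).symm
  have hc : ∀ x s, (MeasurableEquiv.piFinSuccAbove (fun _ : Fin (n + 1) => ℝ) 0).symm (x, s)
      = Fin.cons x s := by
    intro x s
    simp [MeasurableEquiv.piFinSuccAbove]
    rfl
  have h2 := h.integral_comp' f
  have h3 := (h.integrable_comp_emb (MeasurableEquiv.measurableEmbedding _)).2 hf
  constructor
  · rw [cubeMeasure, ← h2, integral_prod_symm]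
    · simp only [hc]
      refine integral_congr_ae (.of_forall fun s => ?_)
      dsimp only
      rw [intervalIntegral.integral_of_le zero_le_one, integral_Ioc_eq_integral_Ioo]
      rfl
    · exact h3
  · filter_upwards [h3.prod_left_ae] with s hs
    rw [intervalIntegrable_iff_integrableOn_Ioo_of_le zero_le_one]
    simp only [Function.comp_def, hc] at hs
    exact hs

/-- The absolute value of the Vandermonde determinant, i.e. `∏_{i<j} |t i - t j|`. -/
noncomputable def vdm {n : ℕ} (t : Fin n → ℝ) : ℝ := |(Matrix.vandermonde t).det|

lemma vdm_nonneg {n : ℕ} (t : Fin n → ℝ) : 0 ≤ vdm t := abs_nonneg _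

lemma vdm_perm {n : ℕ} (σ : Equiv.Perm (Fin n)) (t : Fin n → ℝ) : vdm (t ∘ σ) = vdm t := by
  have h : Matrix.vandermonde (t ∘ σ) = (Matrix.vandermonde t).submatrix σ id := by
    ext i j; simp [Matrix.vandermonde]
  rw [vdm, h, Matrix.det_permute, abs_mul]
  rcases Int.units_eq_one_or (Equiv.Perm.sign σ) with h | h <;> simp [h, vdm]

lemma vdm_cons {n : ℕ} (t : Fin (n + 1) → ℝ) :
    vdm t = (∏ j : Fin n, |t 0 - t j.succ|) * vdm (fun j : Fin n => t j.succ) := by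
  simp only [vdm, Matrix.det_vandermonde, Fin.prod_univ_succ, Fin.prod_Ioi_zero, Fin.prod_Ioi_succ,
    abs_mul, Finset.abs_prod]
  simp only [abs_sub_comm]

lemma vdm_eq_prod {n : ℕ} (t : Fin n → ℝ) :
    vdm t = ∏ p ∈ Finset.univ.filter (fun p : Fin n × Fin n => p.1 < p.2), |t p.1 - t p.2| := by
  rw [vdm, Matrix.det_vandermonde, Finset.prod_filter, ← Finset.univ_product_univ,
    Finset.prod_product, Finset.abs_prod]
  refine Finset.prod_congr rfl fun i _ => ?_
  rw [Finset.abs_prod, ← Finset.prod_filter]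
  refine Finset.prod_congr ?_ fun j _ => abs_sub_comm _ _
  ext j; simp

lemma vdm_pos {n : ℕ} {t : Fin n → ℝ} (ht : Function.Injective t) : 0 < vdm t :=
  abs_pos.2 (Matrix.det_vandermonde_ne_zero_iff.2 ht)

lemma vdm_eq_zero {n : ℕ} {t : Fin n → ℝ} {i j : Fin n} (hij : i ≠ j) (h : t i = t j) :
    vdm t = 0 := by
  rw [vdm, abs_eq_zero, Matrix.det_vandermonde_eq_zero_iff]
  exact ⟨i, j, h, hij⟩

lemma measurable_vdm (n : ℕ) : Measurable (vdm : (Fin n → ℝ) → ℝ) := by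
  unfold vdm
  simp only [Matrix.det_vandermonde]
  fun_prop

lemma vdm_le_one {n : ℕ} {t : Fin n → ℝ} (ht : ∀ i, t i ∈ Set.Ioo (0:ℝ) 1) : vdm t ≤ 1 := by
  rw [vdm_eq_prod]
  refine Finset.prod_le_one (fun _ _ => abs_nonneg _) fun p _ => ?_
  have h1 := ht p.1
  have h2 := ht p.2
  rw [abs_le]
  constructor <;> linarith [h1.1, h1.2, h2.1, h2.2]

lemma vdm_le_abs_sub {n : ℕ} {t : Fin (n + 1) → ℝ} (ht : ∀ i, t i ∈ Set.Ioo (0:ℝ) 1) (j : Fin n) :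
    vdm t ≤ |t 0 - t j.succ| := by
  rw [vdm_cons, ← Finset.mul_prod_erase _ _ (Finset.mem_univ j), mul_assoc]
  refine mul_le_of_le_one_right (abs_nonneg _) ?_
  refine mul_le_one₀ (Finset.prod_le_one (fun _ _ => abs_nonneg _) fun i _ => ?_) (vdm_nonneg _)
    (vdm_le_one fun i => ht _)
  have h1 := ht 0
  have h2 := ht i.succ
  rw [abs_le]
  constructor <;> linarith [h1.1, h1.2, h2.1, h2.2]

/-! ### The real Selberg weight -/

/-- The integrand of the Selberg integral, for real parameters. -/
noncomputable def weight {n : ℕ} (a b c : ℝ) (t : Fin n → ℝ) : ℝ :=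
  (∏ j, (t j ^ (a - 1) * (1 - t j) ^ (b - 1))) * vdm t ^ (2 * c)

/-- The Selberg integral for real parameters. -/
noncomputable def S (n : ℕ) (a b c : ℝ) : ℝ := ∫ t, weight a b c t ∂cubeMeasure n

lemma measurable_weight (n : ℕ) (a b c : ℝ) :
    Measurable (weight a b c : (Fin n → ℝ) → ℝ) := by
  unfold weight
  have := measurable_vdm n
  fun_prop

lemma weight_perm {n : ℕ} (a b c : ℝ) (σ : Equiv.Perm (Fin n)) (t : Fin n → ℝ) :
    weight a b c (t ∘ σ) = weight a b c t := by
  rw [weight, vdm_perm, weight]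
  congr 1
  exact Equiv.prod_comp σ fun j => t j ^ (a - 1) * (1 - t j) ^ (b - 1)

lemma weight_eq_zero {n : ℕ} {a b c : ℝ} (hc : 1 ≤ c) {t : Fin n → ℝ} {i j : Fin n} (hij : i ≠ j)
    (h : t i = t j) : weight a b c t = 0 := by
  rw [weight, vdm_eq_zero hij h, Real.zero_rpow (by linarith), mul_zero]

lemma weight_nonneg {n : ℕ} (a b c : ℝ) {t : Fin n → ℝ} (ht : ∀ i, t i ∈ Set.Ioo (0:ℝ) 1) :
    0 ≤ weight a b c t := by
  refine mul_nonneg (Finset.prod_nonneg fun j _ => ?_) (Real.rpow_nonneg (vdm_nonneg _) _)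
  exact mul_nonneg (Real.rpow_nonneg (ht j).1.le _) (Real.rpow_nonneg (by linarith [(ht j).2]) _)

lemma weight_le_vdm {n : ℕ} {a b c : ℝ} (ha : 1 ≤ a) (hb : 1 ≤ b) (hc : 1 ≤ c) {t : Fin n → ℝ}
    (ht : ∀ i, t i ∈ Set.Ioo (0:ℝ) 1) : weight a b c t ≤ vdm t := by
  have h1 : ∏ j, (t j ^ (a - 1) * (1 - t j) ^ (b - 1)) ≤ 1 := by
    refine Finset.prod_le_one (fun j _ => ?_) fun j _ => ?_
    · exact mul_nonneg (Real.rpow_nonneg (ht j).1.le _)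
        (Real.rpow_nonneg (by linarith [(ht j).2]) _)
    · exact mul_le_one₀ (Real.rpow_le_one (ht j).1.le (ht j).2.le (by linarith))
        (Real.rpow_nonneg (by linarith [(ht j).2]) _)
        (Real.rpow_le_one (by linarith [(ht j).2]) (by linarith [(ht j).1]) (by linarith))
  have h2 : vdm t ^ (2 * c) ≤ vdm t := by
    rcases (vdm_nonneg t).eq_or_lt with h | h
    · rw [← h, Real.zero_rpow (by linarith)]
    · calc vdm t ^ (2 * c) ≤ vdm t ^ (1:ℝ) :=
            Real.rpow_le_rpow_of_exponent_ge h (vdm_le_one ht) (by linarith)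
        _ = vdm t := Real.rpow_one _
  calc weight a b c t ≤ 1 * vdm t ^ (2 * c) :=
        mul_le_mul_of_nonneg_right h1 (Real.rpow_nonneg (vdm_nonneg _) _)
    _ ≤ vdm t := by rw [one_mul]; exact h2

lemma integrable_mul_weight {n : ℕ} {a b c : ℝ} (ha : 1 ≤ a) (hb : 1 ≤ b) (hc : 1 ≤ c)
    {q : (Fin n → ℝ) → ℝ} (hq : Measurable q)
    (hq1 : ∀ t : Fin n → ℝ, (∀ i, t i ∈ Set.Ioo (0:ℝ) 1) → |q t| ≤ 1) :
    Integrable (fun t => q t * weight a b c t) (cubeMeasure n) := by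
  refine Integrable.of_bound (hq.mul (measurable_weight n a b c)).aestronglyMeasurable 1 ?_
  filter_upwards [ae_mem_cube n] with t ht
  rw [norm_mul, Real.norm_eq_abs, Real.norm_eq_abs, abs_of_nonneg (weight_nonneg a b c ht)]
  exact mul_le_one₀ (hq1 t ht) (weight_nonneg a b c ht)
    ((weight_le_vdm ha hb hc ht).trans (vdm_le_one ht))

/-- Dividing the weight by `t 0 - t j` is harmless when `c ≥ 1`, since then the weight is
dominated by the Vandermonde product. -/
lemma integrable_mul_weight_div {n : ℕ} {a b c : ℝ} (ha : 1 ≤ a) (hb : 1 ≤ b) (hc : 1 ≤ c)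
    {q : (Fin (n + 1) → ℝ) → ℝ} (hq : Measurable q)
    (hq1 : ∀ t : Fin (n + 1) → ℝ, (∀ i, t i ∈ Set.Ioo (0:ℝ) 1) → |q t| ≤ 1) (j : Fin n) :
    Integrable (fun t => q t * weight a b c t / (t 0 - t j.succ)) (cubeMeasure (n + 1)) := by
  have hm := measurable_weight (n + 1) a b c
  refine Integrable.of_bound (Measurable.aestronglyMeasurable (by fun_prop)) 1 ?_
  filter_upwards [ae_mem_cube (n + 1)] with t ht
  rw [norm_div, norm_mul, Real.norm_eq_abs, Real.norm_eq_abs, Real.norm_eq_abs,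
    abs_of_nonneg (weight_nonneg a b c ht)]
  refine div_le_one_of_le₀ ?_ (abs_nonneg _)
  calc |q t| * weight a b c t ≤ 1 * weight a b c t :=
        mul_le_mul_of_nonneg_right (hq1 t ht) (weight_nonneg a b c ht)
    _ ≤ |t 0 - t j.succ| := by
        rw [one_mul]; exact (weight_le_vdm ha hb hc ht).trans (vdm_le_abs_sub ht j)

/-- Antisymmetrisation in the variables `t 0` and `t j`. -/
lemma integral_antisymm {n : ℕ} {a b c : ℝ} (ha : 1 ≤ a) (hb : 1 ≤ b) (hc : 1 ≤ c)
    {q r : (Fin (n + 1) → ℝ) → ℝ} (hq : Measurable q)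
    (hq1 : ∀ t : Fin (n + 1) → ℝ, (∀ i, t i ∈ Set.Ioo (0:ℝ) 1) → |q t| ≤ 1) (j : Fin n)
    (hr : ∀ t, q t - q (t ∘ Equiv.swap 0 j.succ) = r t * (t 0 - t j.succ)) :
    2 * ∫ t, q t * weight a b c t / (t 0 - t j.succ) ∂cubeMeasure (n + 1) =
      ∫ t, r t * weight a b c t ∂cubeMeasure (n + 1) := by
  have h1 := integral_perm (Equiv.swap 0 j.succ)
    (fun t : Fin (n + 1) → ℝ => q t * weight a b c t / (t 0 - t j.succ))
  have hi := integrable_mul_weight_div ha hb hc hq hq1 j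
  have hq' : Measurable fun t : Fin (n + 1) → ℝ => q (t ∘ Equiv.swap 0 j.succ) :=
    hq.comp (by fun_prop)
  have hi' := integrable_mul_weight_div ha hb hc hq' (fun t ht => hq1 _ fun i => ht _) j
  have h2 : ∫ t, q (t ∘ Equiv.swap 0 j.succ) * weight a b c t / (t 0 - t j.succ)
      ∂cubeMeasure (n + 1) = - ∫ t, q t * weight a b c t / (t 0 - t j.succ)
      ∂cubeMeasure (n + 1) := by
    rw [← h1, ← integral_neg]
    congr 1
    funext t
    rw [weight_perm]
    simp only [Function.comp_apply, Equiv.swap_apply_left, Equiv.swap_apply_right]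
    rw [← neg_sub (t 0), div_neg, neg_neg]
  have h3 : ∀ t, r t * weight a b c t = q t * weight a b c t / (t 0 - t j.succ) -
      q (t ∘ Equiv.swap 0 j.succ) * weight a b c t / (t 0 - t j.succ) := by
    intro t
    by_cases h : t 0 = t j.succ
    · rw [weight_eq_zero hc (Fin.succ_ne_zero j).symm h]; simp
    · rw [← sub_div, ← sub_mul, hr]
      field_simp [sub_ne_zero.2 h]
  simp only [h3]
  rw [integral_sub hi hi', h2]
  ring

/-! ### Integration by parts in the first variable -/

/-- `∏_j |x - s_j|^{2c}`, the part of the Vandermonde product that involves the variable `x`. -/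
noncomputable def interaction {n : ℕ} (c : ℝ) (s : Fin n → ℝ) (x : ℝ) : ℝ :=
  ∏ j, |x - s j| ^ (2 * c)

lemma hasDerivAt_interaction {n : ℕ} {c : ℝ} (hc : 1 ≤ c) (s : Fin n → ℝ) (x : ℝ) :
    HasDerivAt (interaction c s) (∑ j, 2 * c * interaction c s x / (x - s j)) x := by
  have h : ∀ j ∈ Finset.univ, HasDerivAt (fun y => |y - s j| ^ (2 * c))
      (2 * c * |x - s j| ^ (2 * c) / (x - s j)) x := by
    intro j _
    have h1 := (hasDerivAt_abs_rpow (x - s j) (p := 2 * c) (by linarith)).comp_sub_const x (s j)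
    refine h1.congr_deriv ?_
    by_cases hx : x - s j = 0
    · simp [hx]
    · rw [Real.rpow_sub (abs_pos.2 hx), Real.rpow_two, sq_abs]
      field_simp
  refine (HasDerivAt.fun_finsetProd h).congr_deriv ?_
  refine Finset.sum_congr rfl fun j hj => ?_
  rw [interaction, ← Finset.mul_prod_erase _ _ hj, smul_eq_mul]
  ring

lemma weight_cons {n : ℕ} (a b c x : ℝ) (s : Fin n → ℝ) :
    weight a b c (Fin.cons x s : Fin (n + 1) → ℝ) =
      x ^ (a - 1) * (1 - x) ^ (b - 1) * interaction c s x * weight a b c s := by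
  rw [weight, vdm_cons, Fin.prod_univ_succ,
    Real.mul_rpow (Finset.prod_nonneg fun _ _ => abs_nonneg _) (vdm_nonneg _),
    ← Real.finsetProd_rpow _ _ fun _ _ => abs_nonneg _]
  simp only [Fin.cons_zero, Fin.cons_succ, weight, interaction]
  ring

/-- The fundamental theorem of calculus in the first variable: the integrand `F` is `g s` times
`d/dx (u x * interaction c s x)`, so only the boundary values at `x = 0, 1` remain. -/
lemma integral_by_parts {n : ℕ} {c : ℝ} (hc : 1 ≤ c) {u u' : ℝ → ℝ}
    (hu : ContinuousOn u (Set.Icc 0 1)) (hu' : ∀ x ∈ Set.Ioo (0:ℝ) 1, HasDerivAt u (u' x) x)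
    (g : (Fin n → ℝ) → ℝ) {F : (Fin (n + 1) → ℝ) → ℝ} (hF : Integrable F (cubeMeasure (n + 1)))
    (hFeq : ∀ x ∈ Set.Ioo (0:ℝ) 1, ∀ s : Fin n → ℝ, F (Fin.cons x s) =
      g s * (u' x * interaction c s x + u x * ∑ j, 2 * c * interaction c s x / (x - s j))) :
    ∫ t, F t ∂cubeMeasure (n + 1) =
      ∫ s, g s * (u 1 * interaction c s 1 - u 0 * interaction c s 0) ∂cubeMeasure n := by
  obtain ⟨h1, h2⟩ := integral_succ F hF
  rw [h1]
  refine integral_congr_ae ?_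
  filter_upwards [h2] with s hs
  rw [intervalIntegral.integral_eq_sub_of_hasDerivAt_of_le zero_le_one
    (f := fun x => g s * (u x * interaction c s x)) ?_ ?_ hs]
  · ring
  · refine continuousOn_const.mul (hu.mul ?_)
    exact fun x _ => (hasDerivAt_interaction hc s x).continuousAt.continuousWithinAt
  · intro x hx
    rw [hFeq x hx]
    exact ((hu' x hx).mul (hasDerivAt_interaction hc s x)).const_mul _

/-- `∏_{i ∈ A} t_{i+1}`, a squarefree monomial that does not involve `t 0`. -/
def mono {n : ℕ} (A : Finset (Fin n)) (t : Fin (n + 1) → ℝ) : ℝ := ∏ i ∈ A, t i.succ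

lemma measurable_mono {n : ℕ} (A : Finset (Fin n)) : Measurable (mono A) := by
  unfold mono; fun_prop

lemma mono_mem {n : ℕ} (A : Finset (Fin n)) {t : Fin (n + 1) → ℝ}
    (ht : ∀ i, t i ∈ Set.Ioo (0:ℝ) 1) : 0 ≤ mono A t ∧ mono A t ≤ 1 :=
  ⟨Finset.prod_nonneg fun _ _ => (ht _).1.le,
    Finset.prod_le_one (fun _ _ => (ht _).1.le) fun _ _ => (ht _).2.le⟩

lemma mono_swap_of_notMem {n : ℕ} {A : Finset (Fin n)} {j : Fin n} (hj : j ∉ A)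
    (t : Fin (n + 1) → ℝ) : mono A (t ∘ Equiv.swap 0 j.succ) = mono A t := by
  refine Finset.prod_congr rfl fun i hi => ?_
  have hij : i.succ ≠ j.succ := fun h => hj (Fin.succ_injective _ h ▸ hi)
  simp [Equiv.swap_apply_of_ne_of_ne (Fin.succ_ne_zero i) hij]

lemma mono_insert {n : ℕ} {A : Finset (Fin n)} {j : Fin n} (hj : j ∉ A)
    (t : Fin (n + 1) → ℝ) : mono (insert j A) t = t j.succ * mono A t :=
  Finset.prod_insert hj

lemma integral_zero_mono {n : ℕ} (a b c : ℝ) {A : Finset (Fin n)} {j : Fin n} (hj : j ∉ A) :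
    ∫ t, mono (insert j A) t * weight a b c t ∂cubeMeasure (n + 1) =
      ∫ t, t 0 * mono A t * weight a b c t ∂cubeMeasure (n + 1) := by
  rw [← integral_perm (Equiv.swap 0 j.succ)]
  congr 1
  funext t
  rw [weight_perm, mono_insert hj, mono_swap_of_notMem hj]
  simp

lemma abs_mul_le_one' {x y : ℝ} (hx : |x| ≤ 1) (hy : |y| ≤ 1) : |x * y| ≤ 1 := by
  rw [abs_mul]; exact mul_le_one₀ hx (abs_nonneg _) hy

/-- Aomoto's relation between the averages of `∏_{i ∈ A} t_{i+1}` and `t_0 ∏_{i ∈ A} t_{i+1}`: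
integrate `∂/∂t_0` of `t_0 (1 - t_0) ∏_{i ∈ A} t_{i+1}` times the weight. -/
lemma aomoto {n : ℕ} {a b c : ℝ} (ha : 1 ≤ a) (hb : 1 ≤ b) (hc : 1 ≤ c) (A : Finset (Fin n)) :
    (a + ((n:ℝ) - A.card) * c) * ∫ t, mono A t * weight a b c t ∂cubeMeasure (n + 1) =
      (a + b + (2 * n - A.card) * c) *
        ∫ t, t 0 * mono A t * weight a b c t ∂cubeMeasure (n + 1) := by
  set I := ∫ t, mono A t * weight a b c t ∂cubeMeasure (n + 1) with hI
  set J := ∫ t, t 0 * mono A t * weight a b c t ∂cubeMeasure (n + 1) with hJ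
  have hmono := measurable_mono A
  have habs : ∀ {x : ℝ}, x ∈ Set.Ioo (0:ℝ) 1 → |x| ≤ 1 ∧ |1 - x| ≤ 1 := by
    intro x hx
    constructor <;> rw [abs_le] <;> constructor <;> linarith [hx.1, hx.2]
  have hmabs : ∀ t : Fin (n + 1) → ℝ, (∀ i, t i ∈ Set.Ioo (0:ℝ) 1) → |mono A t| ≤ 1 := by
    intro t ht
    rw [abs_of_nonneg (mono_mem A ht).1]
    exact (mono_mem A ht).2
  have iI : Integrable (fun t => mono A t * weight a b c t) (cubeMeasure (n + 1)) :=
    integrable_mul_weight ha hb hc hmono hmabs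
  have iJ : Integrable (fun t => t 0 * mono A t * weight a b c t) (cubeMeasure (n + 1)) :=
    integrable_mul_weight ha hb hc (by fun_prop)
      fun t ht => abs_mul_le_one' (habs (ht 0)).1 (hmabs t ht)
  have iq : ∀ j : Fin n, Integrable (fun t => t 0 * (1 - t 0) * mono A t * weight a b c t /
      (t 0 - t j.succ)) (cubeMeasure (n + 1)) := fun j =>
    integrable_mul_weight_div ha hb hc (by fun_prop) (fun t ht => abs_mul_le_one'
      (abs_mul_le_one' (habs (ht 0)).1 (habs (ht 0)).2) (hmabs t ht)) j
  have hanti : ∀ j : Fin n, 2 * ∫ t, t 0 * (1 - t 0) * mono A t * weight a b c t /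
      (t 0 - t j.succ) ∂cubeMeasure (n + 1) = if j ∈ A then -J else I - 2 * J := by
    intro j
    split_ifs with hj
    · rw [hJ, ← integral_neg, integral_antisymm ha hb hc (r := fun t => -(t 0 * mono A t))
        (by fun_prop) (fun t ht => abs_mul_le_one'
          (abs_mul_le_one' (habs (ht 0)).1 (habs (ht 0)).2) (hmabs t ht)) j]
      · simp only [neg_mul]
      · intro t
        have hA := Finset.insert_erase hj
        have hn := Finset.notMem_erase j A
        rw [← hA]
        simp only [mono_insert hn, mono_swap_of_notMem hn, Function.comp_apply,
          Equiv.swap_apply_left, Equiv.swap_apply_right]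
        ring
    · have hJj := integral_zero_mono a b c hj
      have iK : Integrable (fun t => mono (insert j A) t * weight a b c t)
          (cubeMeasure (n + 1)) :=
        integrable_mul_weight ha hb hc (measurable_mono _) fun t ht => by
          rw [abs_of_nonneg (mono_mem _ ht).1]
          exact (mono_mem _ ht).2
      rw [integral_antisymm ha hb hc (r := fun t => mono A t - t 0 * mono A t - mono (insert j A) t)
        (by fun_prop) (fun t ht => abs_mul_le_one'
          (abs_mul_le_one' (habs (ht 0)).1 (habs (ht 0)).2) (hmabs t ht)) j]
      · simp only [sub_mul]
        have iIJ : Integrable (fun t => mono A t * weight a b c t - t 0 * mono A t * weight a b c t)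
          (cubeMeasure (n + 1)) := iI.sub iJ
        rw [integral_sub iIJ iK, integral_sub iI iJ, hJj]
        ring
      · intro t
        simp only [mono_insert hj, mono_swap_of_notMem hj, Function.comp_apply,
          Equiv.swap_apply_left]
        ring
  have iIJ : Integrable (fun t => a * (mono A t * weight a b c t) -
      (a + b) * (t 0 * mono A t * weight a b c t)) (cubeMeasure (n + 1)) :=
    (iI.const_mul a).sub (iJ.const_mul _)
  have key := integral_by_parts (n := n) hc (u := fun x => x ^ a * (1 - x) ^ b)
    (u' := fun x => a * x ^ (a - 1) * (1 - x) ^ b - x ^ a * (b * (1 - x) ^ (b - 1)))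
    (g := fun s => (∏ i ∈ A, s i) * weight a b c s)
    (F := fun t => (a * (mono A t * weight a b c t) - (a + b) * (t 0 * mono A t * weight a b c t)) +
      ∑ j : Fin n, 2 * c * (t 0 * (1 - t 0) * mono A t * weight a b c t / (t 0 - t j.succ)))
    ?_ ?_ ?_ ?_
  · rw [integral_add iIJ
      (integrable_finsetSum _ fun j _ => (iq j).const_mul _),
      integral_sub (iI.const_mul a) (iJ.const_mul _), integral_const_mul, integral_const_mul,
      integral_finsetSum _ fun j _ => (iq j).const_mul _] at key
    simp only [integral_const_mul] at key
    have h0 : (0:ℝ) ^ a = 0 := Real.zero_rpow (by linarith)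
    have h0' : (0:ℝ) ^ b = 0 := Real.zero_rpow (by linarith)
    simp only [h0, h0', sub_self, mul_zero, zero_mul, integral_zero] at key
    have hs : ∑ j : Fin n, 2 * c * ∫ t, t 0 * (1 - t 0) * mono A t * weight a b c t /
        (t 0 - t j.succ) ∂cubeMeasure (n + 1) =
        c * (A.card * (-J) + ((n:ℝ) - A.card) * (I - 2 * J)) := by
      have h1 : ∀ j ∈ (Finset.univ : Finset (Fin n)), 2 * c *
          ∫ t, t 0 * (1 - t 0) * mono A t * weight a b c t /
            (t 0 - t j.succ) ∂cubeMeasure (n + 1) =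
          c * (I - 2 * J) + if j ∈ A then c * (J - I) else 0 := by
        intro j _
        have := hanti j
        split_ifs at this ⊢ <;> linear_combination c * this
      rw [Finset.sum_congr rfl h1, Finset.sum_add_distrib, Finset.sum_ite_mem, Finset.univ_inter]
      simp
      ring
    rw [hs, ← hI, ← hJ] at key
    linear_combination key
  · refine ContinuousOn.mul ?_ ?_
    · exact (Real.continuous_rpow_const (by linarith)).continuousOn
    · exact ((Real.continuous_rpow_const (by linarith)).comp
        (continuous_const.sub continuous_id)).continuousOn
  · intro x hx
    have h1 := Real.hasDerivAt_rpow_const (x := x) (p := a) (Or.inl hx.1.ne')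
    have h2 := (Real.hasDerivAt_rpow_const (x := 1 - x) (p := b)
      (Or.inl (by linarith [hx.2]))).comp x ((hasDerivAt_id x).const_sub 1)
    refine (h1.mul h2).congr_deriv ?_
    simp
    ring
  · exact iIJ.add
      (integrable_finsetSum _ fun j _ => (iq j).const_mul _)
  · intro x hx s
    have h1 : x ^ a = x ^ (a - 1) * x := by
      rw [← Real.rpow_add_one hx.1.ne']; congr 1; ring
    have h2 : (1 - x) ^ b = (1 - x) ^ (b - 1) * (1 - x) := by
      rw [← Real.rpow_add_one (by linarith [hx.2])]; congr 1; ring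
    simp only [weight_cons, mono, Fin.cons_zero, Fin.cons_succ]
    rw [mul_add, Finset.mul_sum, Finset.mul_sum]
    congr 1
    · rw [h1, h2]; ring
    · refine Finset.sum_congr rfl fun j _ => ?_
      rw [h1, h2]; ring

lemma integral_mono_weight {n : ℕ} {a b c : ℝ} (ha : 1 ≤ a) (hb : 1 ≤ b) (hc : 1 ≤ c)
    (A : Finset (Fin n)) :
    ∫ t, mono A t * weight a b c t ∂cubeMeasure (n + 1) =
      S (n + 1) a b c * ∏ i ∈ Finset.range A.card,
        (a + ((n:ℝ) - i) * c) / (a + b + (2 * n - i) * c) := by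
  induction A using Finset.induction_on with
  | empty => simp [mono, S]
  | insert j A hj ih =>
    rw [integral_zero_mono a b c hj, Finset.card_insert_of_notMem hj, Finset.prod_range_succ,
      ← mul_assoc, ← ih]
    have hcard : (A.card : ℝ) ≤ n := by exact_mod_cast (card_finset_fin_le A)
    have hpos : 0 < a + b + (2 * n - A.card) * c := by
      have : 0 ≤ (2 * n - (A.card : ℝ)) * c := mul_nonneg (by linarith [A.card.cast_nonneg (α := ℝ)]) (by linarith)
      linarith
    have := aomoto ha hb hc A
    rw [mul_div_assoc', eq_div_iff hpos.ne']
    linear_combination -this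

/-- The recursion `a ↦ a + 1` for the Selberg integral. -/
lemma S_add_one {n : ℕ} {a b c : ℝ} (ha : 1 ≤ a) (hb : 1 ≤ b) (hc : 1 ≤ c) :
    S (n + 1) (a + 1) b c = S (n + 1) a b c * ∏ i ∈ Finset.range (n + 1),
        (a + i * c) / (a + b + (n + i) * c) := by
  have h1 : S (n + 1) (a + 1) b c =
      ∫ t, t 0 * mono Finset.univ t * weight a b c t ∂cubeMeasure (n + 1) := by
    refine integral_congr_ae ?_
    filter_upwards [ae_mem_cube (n + 1)] with t ht
    have h2 : t 0 * mono Finset.univ t = ∏ j, t j := by rw [mono, Fin.prod_univ_succ]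
    rw [h2, weight, weight, ← mul_assoc, ← Finset.prod_mul_distrib]
    congr 1
    refine Finset.prod_congr rfl fun j _ => ?_
    rw [← mul_assoc, mul_comm (t j), ← Real.rpow_add_one (ht j).1.ne']
    congr 2
    ring
  have hpos : 0 < a + b + (2 * n - n) * c := by
    have : 0 ≤ (2 * n - (n : ℝ)) * c :=
      mul_nonneg (by linarith [n.cast_nonneg (α := ℝ)]) (by linarith)
    linarith
  have h3 := aomoto (n := n) ha hb hc Finset.univ
  rw [← h1, integral_mono_weight ha hb hc, Finset.card_univ, Fintype.card_fin] at h3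
  rw [← Finset.prod_range_reflect, Finset.prod_range_succ]
  have h4 : ∏ j ∈ Finset.range n, (a + ((n + 1 - 1 - j : ℕ) : ℝ) * c) /
      (a + b + (n + ((n + 1 - 1 - j : ℕ) : ℝ)) * c) =
      ∏ i ∈ Finset.range n, (a + ((n:ℝ) - i) * c) / (a + b + (2 * n - i) * c) := by
    refine Finset.prod_congr rfl fun i hi => ?_
    have : i ≤ n := (Finset.mem_range.1 hi).le
    rw [Nat.add_sub_cancel, Nat.cast_sub this]
    congr 2
    ring
  rw [h4, ← mul_assoc]
  simp only [Nat.add_sub_cancel, Nat.sub_self, Nat.cast_zero]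
  have hpos' : 0 < a + b + (n + 0) * c := by convert hpos using 3; ring
  rw [mul_div_assoc', eq_div_iff hpos'.ne']
  linear_combination -h3

/-- The boundary term at `t_0 = 0` when `a = 1` lowers the dimension by one. -/
lemma S_one {n : ℕ} {b c : ℝ} (hb : 1 ≤ b) (hc : 1 ≤ c) :
    (b + n * c) * S (n + 1) 1 b c = S n (2 * c + 1) b c := by
  have ha : (1:ℝ) ≤ 1 := le_rfl
  have habs : ∀ {x : ℝ}, x ∈ Set.Ioo (0:ℝ) 1 → |1 - x| ≤ 1 := by
    intro x hx
    rw [abs_le]; constructor <;> linarith [hx.1, hx.2]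
  have iI : Integrable (fun t => weight 1 b c t) (cubeMeasure (n + 1)) := by
    simpa using integrable_mul_weight (n := n + 1) ha hb hc (q := fun _ => 1) (by fun_prop)
      fun t ht => by simp
  have iq : ∀ j : Fin n, Integrable (fun t => (1 - t 0) * weight 1 b c t /
      (t 0 - t j.succ)) (cubeMeasure (n + 1)) := fun j =>
    integrable_mul_weight_div ha hb hc (by fun_prop) (fun t ht => habs (ht 0)) j
  have hanti : ∀ j : Fin n, 2 * ∫ t, (1 - t 0) * weight 1 b c t /
      (t 0 - t j.succ) ∂cubeMeasure (n + 1) = - S (n + 1) 1 b c := by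
    intro j
    rw [integral_antisymm ha hb hc (r := fun t => -1)
        (by fun_prop) (fun t ht => habs (ht 0)) j, S, ← integral_neg]
    · simp only [neg_mul, one_mul]
    · intro t
      simp
  have key := integral_by_parts (n := n) hc (u := fun x => (1 - x) ^ b)
    (u' := fun x => - (b * (1 - x) ^ (b - 1)))
    (g := fun s => weight 1 b c s)
    (F := fun t => -b * weight 1 b c t +
      ∑ j : Fin n, 2 * c * ((1 - t 0) * weight 1 b c t / (t 0 - t j.succ)))
    ?_ ?_ ?_ ?_
  · rw [integral_add (iI.const_mul _) (integrable_finsetSum _ fun j _ => (iq j).const_mul _),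
      integral_const_mul, integral_finsetSum _ fun j _ => (iq j).const_mul _] at key
    simp only [integral_const_mul] at key
    have h0' : (0:ℝ) ^ b = 0 := Real.zero_rpow (by linarith)
    have hs : ∑ j : Fin n, 2 * c * ∫ t, (1 - t 0) * weight 1 b c t /
        (t 0 - t j.succ) ∂cubeMeasure (n + 1) = n * (c * (- S (n + 1) 1 b c)) := by
      have h1 : ∀ j ∈ (Finset.univ : Finset (Fin n)), 2 * c * ∫ t, (1 - t 0) * weight 1 b c t /
            (t 0 - t j.succ) ∂cubeMeasure (n + 1) = c * (- S (n + 1) 1 b c) := by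
        intro j _
        linear_combination c * hanti j
      rw [Finset.sum_congr rfl h1]
      simp
    have hr : ∫ s, weight 1 b c s * ((1 - 1) ^ b * interaction c s 1 -
        (1 - 0) ^ b * interaction c s 0) ∂cubeMeasure n = - S n (2 * c + 1) b c := by
      rw [S, ← integral_neg]
      refine integral_congr_ae ?_
      filter_upwards [ae_mem_cube n] with s hs
      simp only [sub_self, h0', zero_mul, sub_zero, Real.one_rpow, one_mul, zero_sub, mul_neg,
        weight, interaction, abs_neg, Real.rpow_zero, add_sub_cancel_right]
      rw [mul_right_comm, ← Finset.prod_mul_distrib]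
      have h1 : ∀ j ∈ (Finset.univ : Finset (Fin n)), 1 * (1 - s j) ^ (b - 1) * |s j| ^ (2 * c) =
          s j ^ (2 * c) * (1 - s j) ^ (b - 1) := by
        intro j _
        rw [abs_of_pos (hs j).1]; ring
      simp only [one_mul] at h1
      rw [Finset.prod_congr rfl h1]
    rw [hr, hs] at key
    change -b * S (n + 1) 1 b c + _ = _ at key
    linear_combination -key
  · exact ((Real.continuous_rpow_const (by linarith)).comp
        (continuous_const.sub continuous_id)).continuousOn
  · intro x hx
    have h2 := (Real.hasDerivAt_rpow_const (x := 1 - x) (p := b)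
      (Or.inl (by linarith [hx.2]))).comp x ((hasDerivAt_id x).const_sub 1)
    refine h2.congr_deriv ?_
    simp
  · exact (iI.const_mul _).add (integrable_finsetSum _ fun j _ => (iq j).const_mul _)
  · intro x hx s
    have h2 : (1 - x) ^ b = (1 - x) ^ (b - 1) * (1 - x) := by
      rw [← Real.rpow_add_one (by linarith [hx.2])]; congr 1; ring
    simp only [weight_cons, Fin.cons_zero, Fin.cons_succ, sub_self, Real.rpow_zero]
    rw [mul_add, Finset.mul_sum, Finset.mul_sum]
    congr 1
    · ring
    · refine Finset.sum_congr rfl fun j _ => ?_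
      rw [h2]; ring

/-! ### The evaluation for real parameters at least `1` -/

/-- Two antitone functions obeying the same first-order recursion, with multiplier tending to `1`,
agree as soon as they agree at the initial point. -/
lemma eq_of_antitone_of_recursion {f g r : ℝ → ℝ} (hf : AntitoneOn f (Set.Ici 1))
    (hg : AntitoneOn g (Set.Ici 1)) (hf0 : ∀ a, 1 ≤ a → 0 ≤ f a) (hg0 : ∀ a, 1 ≤ a → 0 < g a)
    (hfr : ∀ a, 1 ≤ a → f (a + 1) = f a * r a) (hgr : ∀ a, 1 ≤ a → g (a + 1) = g a * r a)
    (hr : Filter.Tendsto (fun N : ℕ => r (1 + N)) Filter.atTop (nhds 1)) (h1 : f 1 = g 1) :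
    ∀ a, 1 ≤ a → f a = g a := by
  have hshift : ∀ a, 1 ≤ a → ∀ N : ℕ, f (a + N) = f a / g a * g (a + N) := by
    intro a ha N
    induction N with
    | zero => simp [div_mul_cancel₀ _ (hg0 a ha).ne']
    | succ N ih =>
      have hN : 1 ≤ a + N := by linarith [N.cast_nonneg (α := ℝ)]
      rw [Nat.cast_succ, ← add_assoc, hfr _ hN, hgr _ hN, ih]
      ring
  have hbase : ∀ a, 1 ≤ a → a ≤ 2 → f a = g a := by
    intro a ha ha2
    set ρ := f a / g a with hρ
    have hρ0 : 0 ≤ ρ := div_nonneg (hf0 a ha) (hg0 a ha).le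
    have key : ∀ N : ℕ, ρ * r (1 + N) ≤ 1 ∧ r (1 + N) ≤ ρ := by
      intro N
      have hN0 : (0:ℝ) ≤ N := N.cast_nonneg
      have e1 : f (1 + N) = g (1 + N) := by
        rw [hshift 1 le_rfl N, h1, div_self (hg0 1 le_rfl).ne', one_mul]
      have m1 : (1:ℝ) + N ∈ Set.Ici (1:ℝ) := by simp
      have m2 : (1:ℝ) + N + 1 ∈ Set.Ici (1:ℝ) := by simp only [Set.mem_Ici]; linarith
      have ma : a + N ∈ Set.Ici (1:ℝ) := by simp only [Set.mem_Ici]; linarith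
      have l1 : (1:ℝ) + N ≤ a + N := by linarith
      have l2 : a + N ≤ (1:ℝ) + N + 1 := by linarith
      have gp := hg0 _ m1
      have hga1 := hg m1 ma l1
      have hga2 := hg ma m2 l2
      have hfa1 := hf m1 ma l1
      have hfa2 := hf ma m2 l2
      rw [hgr _ m1] at hga2
      rw [hfr _ m1] at hfa2
      rw [hshift a ha N] at hfa1 hfa2
      rw [e1] at hfa1 hfa2
      constructor
      · have := mul_le_mul_of_nonneg_left hga2 hρ0
        have h3 : (ρ * r (1 + N)) * g (1 + N) ≤ 1 * g (1 + N) := by linarith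
        exact le_of_mul_le_mul_right h3 gp
      · have := mul_le_mul_of_nonneg_left hga1 hρ0
        have h3 : r (1 + N) * g (1 + N) ≤ ρ * g (1 + N) := by linarith
        exact le_of_mul_le_mul_right h3 gp
    have hle : ρ ≤ 1 := by
      have := le_of_tendsto (hr.const_mul ρ) (Filter.Eventually.of_forall fun N => (key N).1)
      simpa using this
    have hge : 1 ≤ ρ := le_of_tendsto hr (Filter.Eventually.of_forall fun N => (key N).2)
    have : ρ = 1 := le_antisymm hle hge
    rwa [hρ, div_eq_one_iff_eq (hg0 a ha).ne'] at this
  intro a ha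
  have hfl := Nat.floor_le (sub_nonneg.2 ha)
  have hfl2 := Nat.lt_floor_add_one (a - 1)
  set m := ⌊a - 1⌋₊
  have hy : 1 ≤ a - m := by linarith
  have h := hshift (a - m) hy m
  rwa [hbase _ hy (by linarith), div_self (hg0 _ hy).ne', one_mul, sub_add_cancel] at h

lemma Gamma_div_Gamma_antitone {u u' v : ℝ} (hu : 0 < u) (huu : u ≤ u') (hv : 0 < v) :
    Real.Gamma u' / Real.Gamma (u' + v) ≤ Real.Gamma u / Real.Gamma (u + v) := by
  have hcv := Real.convexOn_log_Gamma
  have hd : 0 < u' - u + v := by linarith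
  have p1 := Real.Gamma_pos_of_pos hu
  have p2 := Real.Gamma_pos_of_pos (hu.trans_le huu)
  have p3 := Real.Gamma_pos_of_pos (add_pos hu hv)
  have p4 := Real.Gamma_pos_of_pos (add_pos (hu.trans_le huu) hv)
  have mu : u ∈ Set.Ioi (0:ℝ) := hu
  have mu' : u' + v ∈ Set.Ioi (0:ℝ) := add_pos (hu.trans_le huu) hv
  have hx : 0 ≤ (u' - u) / (u' - u + v) := div_nonneg (by linarith) hd.le
  have hy : 0 ≤ v / (u' - u + v) := div_nonneg hv.le hd.le
  have hxy : (u' - u) / (u' - u + v) + v / (u' - u + v) = 1 := by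
    rw [← add_div, div_self hd.ne']
  have h1 := hcv.2 mu mu' hx hy hxy
  have h2 := hcv.2 mu mu' hy hx (by rw [add_comm]; exact hxy)
  have e1 : ((u' - u) / (u' - u + v)) • u + (v / (u' - u + v)) • (u' + v) = u + v := by
    simp only [smul_eq_mul]; field_simp; ring
  have e2 : (v / (u' - u + v)) • u + ((u' - u) / (u' - u + v)) • (u' + v) = u' := by
    simp only [smul_eq_mul]; field_simp; ring
  rw [e1] at h1
  rw [e2] at h2
  simp only [Function.comp_apply, smul_eq_mul] at h1 h2
  have h3 : Real.log (Real.Gamma (u + v)) + Real.log (Real.Gamma u') ≤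
      Real.log (Real.Gamma u) + Real.log (Real.Gamma (u' + v)) := by
    have : ∀ A B x y : ℝ, x + y = 1 → x * A + y * B + (y * A + x * B) = A + B := by
      intro A B x y h; linear_combination (A + B) * h
    linarith [this (Real.log (Real.Gamma u)) (Real.log (Real.Gamma (u' + v))) _ _ hxy]
  rw [← Real.log_mul p3.ne' p2.ne', ← Real.log_mul p1.ne' p4.ne'] at h3
  have h4 := (Real.log_le_log_iff (by positivity) (by positivity)).1 h3
  rw [div_le_div_iff₀ p4 p3]
  linarith

/-- The right-hand side of Selberg's formula, for real parameters. -/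
noncomputable def Q (n : ℕ) (a b c : ℝ) : ℝ :=
  ∏ j ∈ Finset.range n, Real.Gamma (a + j * c) * Real.Gamma (b + j * c) *
    Real.Gamma (1 + (j + 1) * c) / (Real.Gamma (a + b + ((n:ℝ) + j - 1) * c) * Real.Gamma (1 + c))

lemma Q_succ (n : ℕ) (a b c : ℝ) : Q (n + 1) a b c =
    ∏ j ∈ Finset.range (n + 1), (Real.Gamma (a + j * c) / Real.Gamma (a + j * c + (b + n * c))) *
      (Real.Gamma (b + j * c) * Real.Gamma (1 + (j + 1) * c) / Real.Gamma (1 + c)) := by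
  refine Finset.prod_congr rfl fun j _ => ?_
  have : a + b + (((n + 1 : ℕ):ℝ) + j - 1) * c = a + j * c + (b + n * c) := by push_cast; ring
  rw [this]
  ring

lemma Q_pos (n : ℕ) {a b c : ℝ} (ha : 1 ≤ a) (hb : 1 ≤ b) (hc : 1 ≤ c) : 0 < Q (n + 1) a b c := by
  rw [Q_succ]
  refine Finset.prod_pos fun j _ => ?_
  have h1 := @Real.Gamma_pos_of_pos (a + j * c) (by positivity)
  have h2 := @Real.Gamma_pos_of_pos (a + j * c + (b + n * c)) (by positivity)
  have h3 := @Real.Gamma_pos_of_pos (b + j * c) (by positivity)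
  have h4 := @Real.Gamma_pos_of_pos (1 + (j + 1) * c) (by positivity)
  have h5 := @Real.Gamma_pos_of_pos (1 + c) (by positivity)
  positivity

lemma Q_antitone (n : ℕ) {b c : ℝ} (hb : 1 ≤ b) (hc : 1 ≤ c) :
    AntitoneOn (fun a => Q (n + 1) a b c) (Set.Ici 1) := by
  intro a ha a' ha' haa
  have ha : 1 ≤ a := ha
  have ha' : 1 ≤ a' := ha'
  simp only [Q_succ]
  refine Finset.prod_le_prod (fun j _ => ?_) fun j _ => ?_
  · have h1 := @Real.Gamma_pos_of_pos (a' + j * c) (by positivity)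
    have h2 := @Real.Gamma_pos_of_pos (a' + j * c + (b + n * c)) (by positivity)
    have h3 := @Real.Gamma_pos_of_pos (b + j * c) (by positivity)
    have h4 := @Real.Gamma_pos_of_pos (1 + (j + 1) * c) (by positivity)
    have h5 := @Real.Gamma_pos_of_pos (1 + c) (by positivity)
    positivity
  · have h3 := @Real.Gamma_pos_of_pos (b + j * c) (by positivity)
    have h4 := @Real.Gamma_pos_of_pos (1 + (j + 1) * c) (by positivity)
    have h5 := @Real.Gamma_pos_of_pos (1 + c) (by positivity)
    refine mul_le_mul_of_nonneg_right ?_ (by positivity)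
    exact Gamma_div_Gamma_antitone (by positivity) (by linarith) (by positivity)

lemma Q_add_one (n : ℕ) {a b c : ℝ} (ha : 1 ≤ a) (hb : 1 ≤ b) (hc : 1 ≤ c) :
    Q (n + 1) (a + 1) b c = Q (n + 1) a b c * ∏ i ∈ Finset.range (n + 1),
        (a + i * c) / (a + b + (n + i) * c) := by
  rw [Q_succ, Q_succ, ← Finset.prod_mul_distrib]
  refine Finset.prod_congr rfl fun j _ => ?_
  have p1 : 0 < a + j * c := by positivity
  have p2 : 0 < a + j * c + (b + n * c) := by positivity
  have p2' : 0 < a + b + (n + j) * c := by positivity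
  have e1 : a + 1 + j * c = a + j * c + 1 := by ring
  have e2 : a + j * c + 1 + (b + n * c) = a + j * c + (b + n * c) + 1 := by ring
  have e3 : a + b + (n + j) * c = a + j * c + (b + n * c) := by ring
  rw [e1, e2, e3, Real.Gamma_add_one p1.ne', Real.Gamma_add_one p2.ne', mul_div_mul_comm]
  ring

lemma Q_one (n : ℕ) {b c : ℝ} (hb : 1 ≤ b) (hc : 1 ≤ c) :
    (b + n * c) * Q (n + 1) 1 b c = Q n (2 * c + 1) b c := by
  set f : ℕ → ℝ := fun j => Real.Gamma (1 + j * c) with hf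
  set g : ℕ → ℝ := fun j => Real.Gamma (1 + b + (n + j) * c) with hg
  set h : ℕ → ℝ := fun j => Real.Gamma (b + j * c) with hh
  have e1 : Q (n + 1) 1 b c = ∏ j ∈ Finset.range (n + 1), f j * h j * f (j + 1) / (g j * f 1) := by
    refine Finset.prod_congr rfl fun j _ => ?_
    have : 1 + b + (((n + 1 : ℕ):ℝ) + j - 1) * c = 1 + b + (n + j) * c := by push_cast; ring
    rw [this]
    simp [hf, hg, hh]
  have e2 : Q n (2 * c + 1) b c =
      ∏ j ∈ Finset.range n, f (j + 1 + 1) * h j * f (j + 1) / (g (j + 1) * f 1) := by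
    refine Finset.prod_congr rfl fun j _ => ?_
    have i1 : 2 * c + 1 + b + ((n:ℝ) + j - 1) * c = 1 + b + (n + ((j + 1 : ℕ):ℝ)) * c := by
      push_cast; ring
    have i2 : 2 * c + 1 + j * c = 1 + ((j + 1 + 1 : ℕ):ℝ) * c := by push_cast; ring
    rw [i1, i2]
    simp [hf, hg, hh]
  have fp : ∀ j, 0 < f j := fun j => Real.Gamma_pos_of_pos (by positivity)
  have gp : ∀ j, 0 < g j := fun j => Real.Gamma_pos_of_pos (by positivity)
  have hp : ∀ j, 0 < h j := fun j => Real.Gamma_pos_of_pos (by positivity)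
  have f0 : f 0 = 1 := by simp [hf]
  have g0 : g 0 = (b + n * c) * h n := by
    have : 1 + b + ((n:ℝ) + (0:ℕ)) * c = b + n * c + 1 := by push_cast; ring
    simp only [hg, hh]
    rw [this, Real.Gamma_add_one (by positivity)]
  rw [e1, e2]
  simp only [Finset.prod_div_distrib, Finset.prod_mul_distrib]
  rw [Finset.prod_range_succ' f, Finset.prod_range_succ h,
    Finset.prod_range_succ' (fun j => f (j + 1)), Finset.prod_range_succ' g,
    Finset.prod_range_succ (fun _ => f 1), f0, g0]
  have P1 : 0 < ∏ j ∈ Finset.range n, g (j + 1) := Finset.prod_pos fun j _ => gp _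
  have P2 : 0 < ∏ j ∈ Finset.range n, f 1 := Finset.prod_pos fun j _ => fp _
  have P3 := hp n
  have P4 := fp 1
  have P5 : 0 < b + n * c := by positivity
  field_simp

lemma S_antitone (n : ℕ) {b c : ℝ} (hb : 1 ≤ b) (hc : 1 ≤ c) :
    AntitoneOn (fun a => S n a b c) (Set.Ici 1) := by
  intro a ha a' ha' haa
  have hi : ∀ a, 1 ≤ a → Integrable (fun t => weight a b c t) (cubeMeasure n) := fun a ha => by
    simpa using integrable_mul_weight (n := n) ha hb hc (q := fun _ => 1) (by fun_prop)
      fun t ht => by simp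
  refine integral_mono_ae (hi _ ha') (hi _ ha) ?_
  filter_upwards [ae_mem_cube n] with t ht
  refine mul_le_mul_of_nonneg_right ?_ (Real.rpow_nonneg (vdm_nonneg _) _)
  have h1 : ∀ j, 0 ≤ (1 - t j) ^ (b - 1) := fun j => Real.rpow_nonneg (by linarith [(ht j).2]) _
  refine Finset.prod_le_prod (fun j _ => mul_nonneg (Real.rpow_nonneg (ht j).1.le _) (h1 j))
    fun j _ => mul_le_mul_of_nonneg_right ?_ (h1 j)
  exact Real.rpow_le_rpow_of_exponent_ge (ht j).1 (ht j).2.le (by linarith)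

/-- Selberg's formula for real parameters `a, b, c ≥ 1`. -/
lemma S_eq_Q (n : ℕ) {a b c : ℝ} (ha : 1 ≤ a) (hb : 1 ≤ b) (hc : 1 ≤ c) : S n a b c = Q n a b c := by
  induction n generalizing a with
  | zero => simp [S, Q, weight, vdm, cubeMeasure]
  | succ n ih =>
    refine eq_of_antitone_of_recursion (f := fun a => S (n + 1) a b c)
      (g := fun a => Q (n + 1) a b c)
      (r := fun a => ∏ i ∈ Finset.range (n + 1), (a + i * c) / (a + b + (n + i) * c))
      (S_antitone _ hb hc) (Q_antitone n hb hc) ?_ (fun a ha => Q_pos n ha hb hc)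
      (fun a ha => S_add_one ha hb hc) (fun a ha => Q_add_one n ha hb hc) ?_ ?_ a ha
    · intro a _
      refine integral_nonneg_of_ae ?_
      filter_upwards [ae_mem_cube (n + 1)] with t ht
      exact weight_nonneg a b c ht
    · have h : ∀ i ∈ Finset.range (n + 1), Filter.Tendsto
          (fun N : ℕ => ((1:ℝ) + N + i * c) / (1 + N + b + (n + i) * c)) Filter.atTop (nhds 1) := by
        intro i _
        have := tendsto_add_mul_div_add_mul_atTop_nhds (1 + i * c) (1 + b + (n + i) * c) 1
          (d := 1) one_ne_zero
        simp only [div_one] at this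
        refine this.congr fun N => ?_
        congr 1 <;> ring
      simpa using tendsto_finsetProd _ h
    · have h1 := S_one (n := n) hb hc
      rw [ih (by linarith), ← Q_one n hb hc] at h1
      exact mul_left_cancel₀ (by positivity) h1

/-! ### Extending a moment generating function beyond its known domain -/

open ProbabilityTheory in
/-- A Landau-type principle. The moment generating function of a nonpositive `X`, once it agrees
for large arguments with a function holomorphic on `c₁ < re z`, is finite and agrees with that
function on all of `(c₁, ∞)`: the Taylor coefficients at a large `d` have alternating signs, so at
points to the left of `d` the Taylor series has nonnegative terms and may be summed under the
integral by monotone convergence. -/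
lemma mgf_extend {Ω : Type*} [MeasurableSpace Ω] {μ : Measure Ω} {X : Ω → ℝ}
    (hX : AEMeasurable X μ) (hX0 : ∀ᵐ ω ∂μ, X ω ≤ 0) {G : ℂ → ℂ} {c₁ c₀ : ℝ}
    (hG : DifferentiableOn ℂ G {z | c₁ < z.re})
    (h : ∀ c : ℝ, c₀ ≤ c → Integrable (fun ω => Real.exp (c * X ω)) μ ∧ (mgf X μ c : ℂ) = G c)
    {c : ℝ} (hc : c₁ < c) :
    Integrable (fun ω => Real.exp (c * X ω)) μ ∧ (mgf X μ c : ℂ) = G c := by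
  rcases le_or_gt c₀ c with h0 | h0
  · exact h c h0
  set d : ℝ := c₀ + 1 with hd
  have hdint : ((d : ℂ)).re ∈ interior (integrableExpSet X μ) := by
    refine mem_interior.2 ⟨Set.Ioi c₀, fun x hx => (h x (le_of_lt hx)).1, isOpen_Ioi, ?_⟩
    simp [hd]
  have hopen : IsOpen {z : ℂ | c₁ < z.re} := isOpen_lt continuous_const Complex.continuous_re
  have hev : (complexMGF X μ) =ᶠ[nhds (d : ℂ)] G := by
    refine ((analyticAt_complexMGF hdint).frequently_eq_iff_eventually_eq
      (hG.analyticAt (hopen.mem_nhds ?_))).1 ?_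
    · simp [hd]; linarith
    · -- the real points to the right of `d` accumulate at `d`
      have hf : ∃ᶠ x : ℝ in nhdsWithin d {d}ᶜ, complexMGF X μ (x : ℂ) = G (x : ℂ) := by
        refine Filter.Eventually.frequently ?_
        have : ∀ᶠ x in nhds d, c₀ < x := lt_mem_nhds (by linarith)
        filter_upwards [nhdsWithin_le_nhds this] with x hx
        rw [complexMGF_ofReal]
        exact (h x hx.le).2
      have ht : Filter.Tendsto (fun x : ℝ => (x : ℂ)) (nhdsWithin d {d}ᶜ)
          (nhdsWithin (d : ℂ) {(d : ℂ)}ᶜ) := by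
        refine tendsto_nhdsWithin_iff.2
          ⟨(Complex.continuous_ofReal.tendsto d).mono_left nhdsWithin_le_nhds, ?_⟩
        filter_upwards [self_mem_nhdsWithin] with x hx
        simpa using hx
      exact ht.frequently hf
  set F : ℕ → Ω → ℝ := fun k ω =>
    ((k.factorial : ℝ)⁻¹ * (c - d) ^ k) * (X ω ^ k * Real.exp (d * X ω)) with hF
  have hFint : ∀ k, Integrable (F k) μ := fun k =>
    (integrable_pow_mul_exp_of_mem_interior_integrableExpSet (by simpa using hdint) k).const_mul _
  have hF0 : ∀ᵐ ω ∂μ, ∀ k, 0 ≤ F k ω := by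
    filter_upwards [hX0] with ω hω k
    have : F k ω = (k.factorial : ℝ)⁻¹ * ((c - d) * X ω) ^ k * Real.exp (d * X ω) := by
      simp only [hF, mul_pow]; ring
    rw [this]
    have : 0 ≤ (c - d) * X ω := mul_nonneg_of_nonpos_of_nonpos (by linarith) hω
    positivity
  have hFsum : ∀ ω, HasSum (fun k => F k ω) (Real.exp (c * X ω)) := by
    intro ω
    have h1 : HasSum (fun k : ℕ => ((c - d) * X ω) ^ k / (k.factorial : ℝ))
        (Real.exp ((c - d) * X ω)) := by
      rw [Real.exp_eq_exp_ℝ]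
      exact NormedSpace.expSeries_div_hasSum_exp ((c - d) * X ω)
    convert! h1.mul_right (Real.exp (d * X ω)) using 1
    · funext k
      simp only [hF, mul_pow]; ring
    · rw [← Real.exp_add]; congr 1; ring
  have hT : HasSum (fun k => ((∫ ω, F k ω ∂μ : ℝ) : ℂ)) (G c) := by
    have h1 := Complex.hasSum_taylorSeries_on_ball (f := G) (c := (d : ℂ)) (r := d - c₁)
      (hG.mono ?_) (z := (c : ℂ)) ?_
    · convert! h1 using 1
      funext k
      rw [← hev.iteratedDeriv_eq k, iteratedDeriv_complexMGF hdint, hF]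
      simp only [integral_const_mul]
      rw [Complex.ofReal_mul, ← integral_complex_ofReal]
      simp only [smul_eq_mul]
      push_cast
      ring
    · intro z hz
      have := (Complex.abs_re_le_norm (z - d)).trans_lt (mem_ball_iff_norm.1 hz)
      simp only [Complex.sub_re, Complex.ofReal_re] at this
      have := (abs_lt.1 this).1
      simp only [Set.mem_ofPred_eq]; linarith
    · rw [mem_ball_iff_norm, ← Complex.ofReal_sub, Complex.norm_real, Real.norm_eq_abs,
        abs_of_neg (by linarith)]
      linarith
  have hsum : Summable (fun k => ∫ ω, F k ω ∂μ) := by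
    have := hT.summable
    exact_mod_cast this
  have hval : ((∑' k, ∫ ω, F k ω ∂μ : ℝ) : ℂ) = G c := by
    rw [Complex.ofReal_tsum]; exact hT.tsum_eq
  have hI0 : ∀ k, 0 ≤ ∫ ω, F k ω ∂μ := fun k =>
    integral_nonneg_of_ae (hF0.mono fun ω hω => hω k)
  have hL : ∫⁻ ω, ENNReal.ofReal (Real.exp (c * X ω)) ∂μ
      = ENNReal.ofReal (∑' k, ∫ ω, F k ω ∂μ) := by
    have h1 : ∫⁻ ω, ENNReal.ofReal (Real.exp (c * X ω)) ∂μ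
        = ∫⁻ ω, ∑' k, ENNReal.ofReal (F k ω) ∂μ := by
      refine lintegral_congr_ae ?_
      filter_upwards [hF0] with ω hω
      rw [← ENNReal.ofReal_tsum_of_nonneg hω (hFsum ω).summable, (hFsum ω).tsum_eq]
    rw [h1, lintegral_tsum fun k => (hFint k).1.aemeasurable.ennreal_ofReal,
      ENNReal.ofReal_tsum_of_nonneg hI0 hsum]
    refine tsum_congr fun k => ?_
    rw [ofReal_integral_eq_lintegral_ofReal (hFint k) (hF0.mono fun ω hω => hω k)]
  have hmeas : AEStronglyMeasurable (fun ω => Real.exp (c * X ω)) μ :=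
    (Real.measurable_exp.comp_aemeasurable (hX.const_mul c)).aestronglyMeasurable
  have hpos : 0 ≤ᵐ[μ] fun ω => Real.exp (c * X ω) :=
    Filter.Eventually.of_forall fun ω => (Real.exp_pos _).le
  refine ⟨?_, ?_⟩
  · rw [← lintegral_ofReal_ne_top_iff_integrable hmeas hpos, hL]
    exact ENNReal.ofReal_ne_top
  · rw [← hval, mgf, integral_eq_lintegral_of_nonneg_ae hpos hmeas, hL,
      ENNReal.toReal_ofReal (tsum_nonneg hI0)]

/-! ### The weight as an exponential -/

/-- The logarithm of the weight with exponents `a`, `b` and `2 * c`; it is linear in `(a, b, c)`. -/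
noncomputable def logWeight {n : ℕ} (a b c : ℝ) (t : Fin n → ℝ) : ℝ :=
  a * ∑ j, Real.log (t j) + b * ∑ j, Real.log (1 - t j) + c * (2 * Real.log (vdm t))

lemma measurable_logWeight (n : ℕ) (a b c : ℝ) :
    Measurable (logWeight a b c : (Fin n → ℝ) → ℝ) := by
  unfold logWeight
  have := measurable_vdm n
  fun_prop

lemma weight_eq_exp {n : ℕ} (a b c : ℝ) {t : Fin n → ℝ} (ht : ∀ i, t i ∈ Set.Ioo (0:ℝ) 1)
    (hi : Function.Injective t) : weight a b c t = Real.exp (logWeight (a - 1) (b - 1) c t) := by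
  have h1 : ∏ j, (t j ^ (a - 1) * (1 - t j) ^ (b - 1)) = Real.exp (∑ j,
      (Real.log (t j) * (a - 1) + Real.log (1 - t j) * (b - 1))) := by
    rw [Real.exp_sum]
    refine Finset.prod_congr rfl fun j _ => ?_
    rw [Real.exp_add, Real.rpow_def_of_pos (ht j).1,
      Real.rpow_def_of_pos (sub_pos.2 (ht j).2)]
  rw [weight, h1, Real.rpow_def_of_pos (vdm_pos hi), ← Real.exp_add, logWeight,
    Finset.sum_add_distrib, ← Finset.sum_mul, ← Finset.sum_mul]
  congr 1
  ring

lemma weight_add {n : ℕ} (a b c a' b' c' z : ℝ) {t : Fin n → ℝ}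
    (ht : ∀ i, t i ∈ Set.Ioo (0:ℝ) 1) (hi : Function.Injective t) :
    weight a b c t * Real.exp (z * logWeight a' b' c' t)
      = weight (a + z * a') (b + z * b') (c + z * c') t := by
  rw [weight_eq_exp _ _ _ ht hi, weight_eq_exp _ _ _ ht hi, ← Real.exp_add]
  simp only [logWeight]
  congr 1
  ring

/-- The integrand of the Selberg integral splits off its phase as the exponential of an imaginary
multiple of a `logWeight`. -/
lemma integrand_eq {n : ℕ} (α β γ : ℂ) {t : Fin n → ℝ} (ht : ∀ i, t i ∈ Set.Ioo (0:ℝ) 1)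
    (hi : Function.Injective t) :
    (∏ j, ((t j : ℂ) ^ (α - 1) * (((1 - t j : ℝ)) : ℂ) ^ (β - 1))) *
        ∏ p ∈ Finset.univ.filter (fun p : Fin n × Fin n => p.1 < p.2),
          ((|t p.1 - t p.2| : ℝ) : ℂ) ^ (2 * γ)
      = weight α.re β.re γ.re t * cexp (I * logWeight α.im β.im γ.im t) := by
  have hpow : ∀ (x : ℝ) (s : ℂ), 0 < x → (x : ℂ) ^ s = cexp (Real.log x * s) := by
    intro x s hx
    rw [Complex.cpow_def_of_ne_zero (by exact_mod_cast hx.ne'), Complex.ofReal_log hx.le]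
  have h1 : ∏ j, ((t j : ℂ) ^ (α - 1) * (((1 - t j : ℝ)) : ℂ) ^ (β - 1)) = cexp (∑ j,
      ((Real.log (t j) : ℂ) * (α - 1) + Real.log (1 - t j) * (β - 1))) := by
    rw [Complex.exp_sum]
    refine Finset.prod_congr rfl fun j _ => ?_
    rw [Complex.exp_add, hpow _ _ (ht j).1, hpow _ _ (sub_pos.2 (ht j).2)]
  have hne : ∀ p ∈ Finset.univ.filter (fun p : Fin n × Fin n => p.1 < p.2),
      0 < |t p.1 - t p.2| := fun p hp =>
    abs_pos.2 (sub_ne_zero.2 (hi.ne (Finset.mem_filter.1 hp).2.ne))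
  have h2 : ∏ p ∈ Finset.univ.filter (fun p : Fin n × Fin n => p.1 < p.2),
      ((|t p.1 - t p.2| : ℝ) : ℂ) ^ (2 * γ) = cexp (Real.log (vdm t) * (2 * γ)) := by
    rw [vdm_eq_prod, Real.log_prod fun p hp => (hne p hp).ne', Complex.ofReal_sum, Finset.sum_mul,
      Complex.exp_sum]
    exact Finset.prod_congr rfl fun p hp => hpow _ _ (hne p hp)
  rw [h1, h2, weight_eq_exp _ _ _ ht hi, Complex.ofReal_exp, ← Complex.exp_add, ← Complex.exp_add,
    Finset.sum_add_distrib, ← Finset.sum_mul, ← Finset.sum_mul]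
  congr 1
  simp only [logWeight]
  push_cast
  conv_lhs => rw [← Complex.re_add_im α, ← Complex.re_add_im β, ← Complex.re_add_im γ]
  ring

/-- The measure on the cube whose density is the weight. -/
noncomputable def weightMeasure (n : ℕ) (a b c : ℝ) : Measure (Fin n → ℝ) :=
  (cubeMeasure n).withDensity fun t => ENNReal.ofReal (weight a b c t)

lemma integrable_weightMeasure_iff {n : ℕ} (a b c a' b' c' z : ℝ) :
    Integrable (fun t => Real.exp (z * logWeight a' b' c' t)) (weightMeasure n a b c) ↔
      Integrable (weight (a + z * a') (b + z * b') (c + z * c')) (cubeMeasure n) := by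
  rw [weightMeasure, integrable_withDensity_iff_integrable_smul'
    (measurable_weight n a b c).ennreal_ofReal (by simp)]
  refine integrable_congr ?_
  filter_upwards [ae_mem_cube n, ae_injective n] with t ht hi
  rw [ENNReal.toReal_ofReal (weight_nonneg _ _ _ ht), smul_eq_mul, weight_add _ _ _ _ _ _ _ ht hi]

open ProbabilityTheory in
lemma mgf_logWeight {n : ℕ} (a b c a' b' c' z : ℝ) :
    mgf (logWeight a' b' c') (weightMeasure n a b c) z
      = S n (a + z * a') (b + z * b') (c + z * c') := by
  rw [mgf, weightMeasure, integral_withDensity_eq_integral_toReal_smul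
    (measurable_weight n a b c).ennreal_ofReal (by simp), S]
  refine integral_congr_ae ?_
  filter_upwards [ae_mem_cube n, ae_injective n] with t ht hi
  rw [ENNReal.toReal_ofReal (weight_nonneg _ _ _ ht), smul_eq_mul, weight_add _ _ _ _ _ _ _ ht hi]

open ProbabilityTheory in
lemma complexMGF_logWeight {n : ℕ} (a b c a' b' c' : ℝ) (z : ℂ) :
    complexMGF (logWeight a' b' c') (weightMeasure n a b c) z
      = ∫ t, (weight a b c t : ℂ) * cexp (z * logWeight a' b' c' t) ∂cubeMeasure n := by
  rw [complexMGF, weightMeasure, integral_withDensity_eq_integral_toReal_smul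
    (measurable_weight n a b c).ennreal_ofReal (by simp)]
  refine integral_congr_ae ?_
  filter_upwards [ae_mem_cube n] with t ht
  rw [ENNReal.toReal_ofReal (weight_nonneg _ _ _ ht), Complex.real_smul]

lemma ae_logWeight_nonpos (n : ℕ) (a b c : ℝ) :
    ∀ᵐ t ∂weightMeasure n a b c, logWeight 1 1 1 t ≤ 0 := by
  refine (withDensity_absolutelyContinuous _ _).ae_le ?_
  filter_upwards [ae_mem_cube n] with t ht
  have h1 : ∑ j, Real.log (t j) ≤ 0 := Finset.sum_nonpos fun j _ =>
    Real.log_nonpos (ht j).1.le (ht j).2.le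
  have h2 : ∑ j, Real.log (1 - t j) ≤ 0 := Finset.sum_nonpos fun j _ =>
    Real.log_nonpos (by linarith [(ht j).2]) (by linarith [(ht j).1])
  have h3 : Real.log (vdm t) ≤ 0 := Real.log_nonpos (vdm_nonneg _) (vdm_le_one ht)
  simp only [logWeight]
  linarith

/-! ### The Gamma product -/

/-- The right-hand side of the Selberg formula for complex parameters. -/
noncomputable def gammaProduct (n : ℕ) (α β γ : ℂ) : ℂ :=
  ∏ j ∈ Finset.range n,
    Complex.Gamma (α + j * γ) * Complex.Gamma (β + j * γ) *
      Complex.Gamma (1 + (j + 1) * γ) /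
      (Complex.Gamma (α + β + ((n:ℂ) + j - 1) * γ) * Complex.Gamma (1 + γ))

lemma ofReal_Q (n : ℕ) (a b c : ℝ) : (Q n a b c : ℂ) = gammaProduct n a b c := by
  rw [Q, gammaProduct]
  push_cast [← Complex.Gamma_ofReal]
  rfl

/-- The domain of the Selberg formula, in terms of the real parts of the parameters. -/
def Dom (n : ℕ) (a b c : ℝ) : Prop :=
  0 < a ∧ 0 < b ∧ 0 < 1 + n * c ∧ 0 < a + ((n:ℝ) - 1) * c ∧ 0 < b + ((n:ℝ) - 1) * c

lemma isOpen_Dom (n : ℕ) (a b c a' b' c' : ℝ) :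
    IsOpen {z : ℝ | Dom n (a + z * a') (b + z * b') (c + z * c')} := by
  unfold Dom
  simp only [Set.ofPred_and]
  refine IsOpen.inter ?_ (IsOpen.inter ?_ (IsOpen.inter ?_ (IsOpen.inter ?_ ?_))) <;>
    exact isOpen_lt (by fun_prop) (by fun_prop)

/-- A linear function of `x ∈ [0, m]` that is positive at both ends is positive. -/
lemma add_mul_pos {a c x m : ℝ} (h0 : 0 < a) (hm : 0 < a + m * c) (hx : 0 ≤ x) (hxm : x ≤ m) :
    0 < a + x * c := by
  rcases le_total 0 c with hc | hc
  · positivity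
  · nlinarith

lemma differentiableAt_gammaProduct {n : ℕ} (α β γ α' β' γ' z : ℂ)
    (h : Dom n (α + z * α').re (β + z * β').re (γ + z * γ').re) :
    DifferentiableAt ℂ
      (fun z => gammaProduct n (α + z * α') (β + z * β') (γ + z * γ')) z := by
  unfold gammaProduct
  refine DifferentiableAt.fun_finsetProd fun j hj => ?_
  have hG : ∀ f : ℂ → ℂ, DifferentiableAt ℂ f z → 0 < (f z).re →
      DifferentiableAt ℂ (fun z => Complex.Gamma (f z)) z := by
    intro f hf hp
    refine DifferentiableAt.comp z (Complex.differentiableAt_Gamma _ fun m hm => ?_) hf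
    rw [hm] at hp
    simp at hp
    linarith [(Nat.cast_nonneg m : (0:ℝ) ≤ m)]
  have hI : ∀ f : ℂ → ℂ, DifferentiableAt ℂ f z →
      DifferentiableAt ℂ (fun z => (Complex.Gamma (f z))⁻¹) z := fun f hf =>
    DifferentiableAt.comp (g := fun s => (Complex.Gamma s)⁻¹) z
      (Complex.differentiable_one_div_Gamma (f z)) hf
  have hj1 : (j:ℝ) + 1 ≤ n := by exact_mod_cast Finset.mem_range.1 hj
  have hj0 : (0:ℝ) ≤ j := Nat.cast_nonneg j
  obtain ⟨h1, h2, h3, h4, h5⟩ := h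
  simp only [div_eq_mul_inv, mul_inv]
  refine DifferentiableAt.fun_mul (DifferentiableAt.fun_mul (DifferentiableAt.fun_mul
    (hG _ (by fun_prop) ?_) (hG _ (by fun_prop) ?_)) (hG _ (by fun_prop) ?_))
    (DifferentiableAt.fun_mul (hI _ (by fun_prop)) (hI _ (by fun_prop)))
  · have := add_mul_pos h1 h4 hj0 (by linarith)
    rw [Complex.add_re, ← Complex.ofReal_natCast, Complex.re_ofReal_mul]
    exact this
  · have := add_mul_pos h2 h5 hj0 (by linarith)
    rw [Complex.add_re, ← Complex.ofReal_natCast, Complex.re_ofReal_mul]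
    exact this
  · have := add_mul_pos one_pos h3 (by linarith : (0:ℝ) ≤ j + 1) hj1
    have h' : ((j:ℂ) + 1) = ((j + 1 : ℕ) : ℂ) := by push_cast; rfl
    rw [h', Complex.add_re, ← Complex.ofReal_natCast, Complex.re_ofReal_mul]
    push_cast
    exact this

/-! ### Real parameters -/

lemma real_selberg {n : ℕ} (hn : 1 ≤ n) {a b c : ℝ} (h : Dom n a b c) :
    Integrable (weight a b c) (cubeMeasure n) ∧ (S n a b c : ℂ) = gammaProduct n a b c := by
  have hn' : (1:ℝ) ≤ n := by exact_mod_cast hn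
  obtain ⟨ε, hε, hball⟩ := Metric.isOpen_iff.1 (isOpen_Dom n a b c 1 1 1) 0 (by simpa using h)
  -- the domain is stable under increasing all three parameters by the same amount
  have hdom : ∀ z : ℝ, -ε < z → Dom n (a + z * 1) (b + z * 1) (c + z * 1) := by
    intro z hz
    rcases lt_or_ge z ε with h1 | h1
    · exact hball (by simpa [abs_lt] using ⟨hz, h1⟩)
    · obtain ⟨h2, h3, h4, h5, h6⟩ := h
      have hz0 : 0 ≤ z := by linarith
      have := mul_nonneg (by linarith : (0:ℝ) ≤ n - 1) hz0
      have := mul_nonneg (by linarith : (0:ℝ) ≤ n) hz0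
      refine ⟨?_, ?_, ?_, ?_, ?_⟩ <;> linarith
  have hmain := mgf_extend (μ := weightMeasure n a b c) (X := logWeight 1 1 1)
    (G := fun z => gammaProduct n (a + z * 1) (b + z * 1) (c + z * 1)) (c₁ := -ε)
    (c₀ := 1 + |a| + |b| + |c|) (c := 0)
    (measurable_logWeight n 1 1 1).aemeasurable (ae_logWeight_nonpos n a b c) ?_ ?_ (by linarith)
  · rw [integrable_weightMeasure_iff, mgf_logWeight] at hmain
    simpa using hmain
  · intro z hz
    refine (differentiableAt_gammaProduct _ _ _ _ _ _ z ?_).differentiableWithinAt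
    simpa using hdom z.re hz
  · intro z hz
    have ha : 1 ≤ a + z * 1 := by linarith [neg_abs_le a, abs_nonneg b, abs_nonneg c]
    have hb : 1 ≤ b + z * 1 := by linarith [neg_abs_le b, abs_nonneg a, abs_nonneg c]
    have hc : 1 ≤ c + z * 1 := by linarith [neg_abs_le c, abs_nonneg b, abs_nonneg a]
    rw [integrable_weightMeasure_iff, mgf_logWeight, S_eq_Q n ha hb hc, ofReal_Q]
    refine ⟨?_, by push_cast; rfl⟩
    simpa using integrable_mul_weight (n := n) ha hb hc (q := fun _ => 1) (by fun_prop)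
      fun t ht => by simp

/-! ### Complex parameters -/

open ProbabilityTheory in
lemma complex_selberg {n : ℕ} (hn : 1 ≤ n) {α β γ : ℂ} (h : Dom n α.re β.re γ.re) :
    ∫ t, (weight α.re β.re γ.re t : ℂ) * cexp (I * logWeight α.im β.im γ.im t) ∂cubeMeasure n
      = gammaProduct n α β γ := by
  obtain ⟨ε, hε, hball⟩ := Metric.isOpen_iff.1
    (isOpen_Dom n α.re β.re γ.re α.im β.im γ.im) 0 (by simpa using h)
  have hdom : ∀ z : ℝ, z ∈ Set.Ioo (-ε) ε →
      Dom n (α.re + z * α.im) (β.re + z * β.im) (γ.re + z * γ.im) := fun z hz =>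
    hball (by simpa [abs_lt] using hz)
  set U : Set ℂ := {z | z.re ∈ Set.Ioo (-ε) ε} with hU
  have hUo : IsOpen U := isOpen_Ioo.preimage Complex.continuous_re
  have hUc : IsPreconnected U :=
    ((convex_Ioo (-ε) ε).linear_preimage Complex.reLm).isPreconnected
  have hsub : Set.Ioo (-ε) ε ⊆ interior (integrableExpSet (logWeight α.im β.im γ.im)
      (weightMeasure n α.re β.re γ.re)) := by
    refine interior_maximal (fun z hz => ?_) isOpen_Ioo
    exact (integrable_weightMeasure_iff _ _ _ _ _ _ _).2 (real_selberg hn (hdom z hz)).1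
  have hf : AnalyticOnNhd ℂ (complexMGF (logWeight α.im β.im γ.im)
      (weightMeasure n α.re β.re γ.re)) U :=
    analyticOnNhd_complexMGF.mono fun z hz => hsub hz
  have hg : AnalyticOnNhd ℂ (fun z : ℂ => gammaProduct n (α.re + z * α.im) (β.re + z * β.im)
      (γ.re + z * γ.im)) U := by
    refine DifferentiableOn.analyticOnNhd (fun z hz => ?_) hUo
    refine (differentiableAt_gammaProduct _ _ _ _ _ _ z ?_).differentiableWithinAt
    simpa using hdom z.re hz
  have hfg : ∃ᶠ z : ℂ in nhdsWithin (0:ℂ) {0}ᶜ, complexMGF (logWeight α.im β.im γ.im)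
      (weightMeasure n α.re β.re γ.re) z = gammaProduct n (α.re + z * α.im) (β.re + z * β.im)
      (γ.re + z * γ.im) := by
    have hfr : ∃ᶠ x : ℝ in nhdsWithin (0:ℝ) {0}ᶜ, complexMGF (logWeight α.im β.im γ.im)
        (weightMeasure n α.re β.re γ.re) (x : ℂ) = gammaProduct n (α.re + (x : ℂ) * α.im)
        (β.re + (x : ℂ) * β.im) (γ.re + (x : ℂ) * γ.im) := by
      refine Filter.Eventually.frequently ?_
      filter_upwards [nhdsWithin_le_nhds (Ioo_mem_nhds (neg_lt_zero.2 hε) hε)] with x hx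
      rw [complexMGF_ofReal, mgf_logWeight, (real_selberg hn (hdom x hx)).2]
      push_cast
      rfl
    have ht : Filter.Tendsto (fun x : ℝ => (x : ℂ)) (nhdsWithin 0 {0}ᶜ)
        (nhdsWithin (0 : ℂ) {(0 : ℂ)}ᶜ) := by
      refine tendsto_nhdsWithin_iff.2
        ⟨(Complex.continuous_ofReal.tendsto 0).mono_left nhdsWithin_le_nhds, ?_⟩
      filter_upwards [self_mem_nhdsWithin] with x hx
      simpa using hx
    exact ht.frequently hfr
  have hI := hf.eqOn_of_preconnected_of_frequently_eq hg hUc (by simp [hU, hε]) hfg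
    (x := I) (by simp [hU, hε])
  simp only [complexMGF_logWeight] at hI
  rw [hI]
  congr 1 <;> simp [mul_comm I, Complex.re_add_im]

end Selberg

/-- the Selberg integral. -/
theorem selberg_integral
    (n : ℕ) (hn : 2 ≤ n) (α β γ : ℂ)
    (hα : 0 < α.re) (hβ : 0 < β.re)
    (hγ : γ.re > -min (1/(n:ℝ)) (min (α.re/((n:ℝ)-1)) (β.re/((n:ℝ)-1)))) :
    (∫ t : Fin n → ℝ in Set.univ.pi fun _ => Set.Icc (0:ℝ) 1,
      (∏ j, ((t j : ℂ) ^ (α - 1) * (((1 - t j : ℝ)) : ℂ) ^ (β - 1))) *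
        ∏ p ∈ Finset.univ.filter (fun p : Fin n × Fin n => p.1 < p.2),
          ((|t p.1 - t p.2| : ℝ) : ℂ) ^ (2 * γ)) =
    ∏ j ∈ Finset.range n,
      Complex.Gamma (α + j * γ) * Complex.Gamma (β + j * γ) *
        Complex.Gamma (1 + (j + 1) * γ) /
        (Complex.Gamma (α + β + ((n:ℂ) + j - 1) * γ) * Complex.Gamma (1 + γ)) := by
  have hn' : (2:ℝ) ≤ n := by exact_mod_cast hn
  have hm : (0:ℝ) < (n:ℝ) - 1 := by linarith
  obtain ⟨h1, h2, h3⟩ : -γ.re < 1 / (n:ℝ) ∧ -γ.re < α.re / ((n:ℝ) - 1) ∧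
      -γ.re < β.re / ((n:ℝ) - 1) := by
    have : -γ.re < min (1/(n:ℝ)) (min (α.re/((n:ℝ)-1)) (β.re/((n:ℝ)-1))) := by linarith
    simpa only [lt_min_iff] using this
  rw [lt_div_iff₀ (by linarith)] at h1
  rw [lt_div_iff₀ hm] at h2 h3
  have hdom : Selberg.Dom n α.re β.re γ.re :=
    ⟨hα, hβ, by linarith, by linarith, by linarith⟩
  rw [← Selberg.cubeMeasure_eq]
  refine Eq.trans (integral_congr_ae ?_) (Selberg.complex_selberg (by lia) hdom)
  filter_upwards [Selberg.ae_mem_cube n, Selberg.ae_injective n] with t ht hi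
  exact Selberg.integrand_eq α β γ ht hi
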